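/- The map f : ℝ³ → ℝ⁴ is infinitely differentiable (C^∞), and at every point (q,p,z) ∈ ℝ³ its Fréchet derivative Df(q,p,z) : ℝ³ → ℝ⁴ is an injective linear map (i.e., f is a smooth immersion). -/

import Mathlib

open Real

/-- λ(q,p,z) = (1 + p²/4 + z²)^(−1/2) -/
noncomputable def lam (q p z : ℝ) : ℝ := (Real.sqrt (1 + p ^ 2 / 4 + z ^ 2))⁻¹

/-- f(q,p,z) = λ·(p/2·sin q − z·cos q, cos q, sin q, p/2·cos q + z·sin q) ∈ ℝ⁴,
as a map on ℝ³ = ℝ × ℝ × ℝ. -/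
noncomputable def f (x : ℝ × ℝ × ℝ) : EuclideanSpace ℝ (Fin 4) :=
  lam x.1 x.2.1 x.2.2 •
    (WithLp.equiv 2 (Fin 4 → ℝ)).symm
      ![x.2.1 / 2 * Real.sin x.1 - x.2.2 * Real.cos x.1, Real.cos x.1, Real.sin x.1,
        x.2.1 / 2 * Real.cos x.1 + x.2.2 * Real.sin x.1]

/-!
Up to the positive factor `λ`, the map `f` parametrizes the cylinder `y₁² + y₂² = 1` in `ℝ⁴` (with
coordinates `y₀, …, y₃`), so `f` is the central projection of that cylinder to the unit sphere.
Rescaling an immersion by a nonvanishing function again gives an immersion as long as the radial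
direction is nowhere tangent to it. In an orthonormal frame rotating with `q`, the cylinder is seen
to be immersed and nowhere tangent to the radial direction.
-/

theorem injective_fderiv_smul {𝕜 E F : Type*} [NontriviallyNormedField 𝕜]
    [NormedAddCommGroup E] [NormedSpace 𝕜 E] [NormedAddCommGroup F] [NormedSpace 𝕜 F]
    {c : E → 𝕜} {g : E → F} {x : E} (hc : DifferentiableAt 𝕜 c x) (hg : DifferentiableAt 𝕜 g x)
    (hcx : c x ≠ 0) (htransverse : ∀ v (t : 𝕜), fderiv 𝕜 g x v = t • g x → v = 0) :
    Function.Injective (fderiv 𝕜 (fun y => c y • g y) x) := by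
  rw [injective_iff_map_eq_zero]
  intro v hv
  have leibniz : c x • fderiv 𝕜 g x v + fderiv 𝕜 c x v • g x = 0 := by
    simpa [fderiv_fun_smul hc hg] using hv
  apply htransverse v (-((c x)⁻¹ * fderiv 𝕜 c x v))
  rw [neg_smul, mul_smul, ← smul_neg, eq_inv_smul_iff₀ hcx]
  exact eq_neg_of_add_eq_zero_left leibniz

theorem hasDerivAt_piLp {𝕜 ι : Type*} [NontriviallyNormedField 𝕜] [Fintype ι] {E : ι → Type*}
    [∀ i, NormedAddCommGroup (E i)] [∀ i, NormedSpace 𝕜 (E i)] (p : ENNReal) [Fact (1 ≤ p)]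
    {g : 𝕜 → PiLp p E} {g' : PiLp p E} {t : 𝕜} :
    HasDerivAt g g' t ↔ ∀ i, HasDerivAt (fun s => g s i) (g' i) t := by
  simp only [← hasDerivWithinAt_univ, hasDerivWithinAt_iff_hasFDerivWithinAt,
    hasFDerivWithinAt_piLp, ContinuousLinearMap.comp_toSpanSingleton, PiLp.proj_apply]

/-- The orthonormal frame of `ℝ⁴` rotating with the angle `q`: the first two vectors are the radial
and tangential unit vectors of the circle in the `(y₁, y₂)`-plane, the last two span the
`(y₀, y₃)`-plane and are the directions in which `p` and `z` move. -/
noncomputable def rotatingFrame (q : ℝ) : Fin 4 → EuclideanSpace ℝ (Fin 4) :=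
  ![!₂[0, cos q, sin q, 0], !₂[0, -sin q, cos q, 0],
    !₂[sin q, 0, 0, cos q], !₂[-cos q, 0, 0, sin q]]

theorem orthonormal_rotatingFrame (q : ℝ) : Orthonormal ℝ (rotatingFrame q) := by
  refine ⟨fun i => ?_, fun i j hij => ?_⟩
  · fin_cases i <;> simp [rotatingFrame, EuclideanSpace.norm_eq, Fin.sum_univ_four]
  · fin_cases i <;> fin_cases j <;>
      simp [rotatingFrame, PiLp.inner_apply, Fin.sum_univ_four, mul_comm] at hij ⊢

theorem contDiff_rotatingFrame {n : WithTop ℕ∞} : ContDiff ℝ n rotatingFrame := by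
  refine contDiff_pi.2 fun i => contDiff_euclidean.2 fun j => ?_
  fin_cases i <;> fin_cases j <;>
    simp [rotatingFrame, contDiff_sin, contDiff_cos, contDiff_sin.neg, contDiff_cos.neg,
      contDiff_const]

theorem hasDerivAt_rotatingFrame (q : ℝ) :
    HasDerivAt rotatingFrame
      ![rotatingFrame q 1, -rotatingFrame q 0, -rotatingFrame q 3, rotatingFrame q 2] q := by
  have hneg_cos : HasDerivAt (fun s => -cos s) (sin q) q := by
    simpa using (hasDerivAt_cos q).fun_neg
  refine hasDerivAt_pi.2 fun i => (hasDerivAt_piLp 2).2 fun j => ?_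
  fin_cases i <;> fin_cases j <;>
    simp [rotatingFrame, hasDerivAt_sin, hasDerivAt_cos, hneg_cos,
      (hasDerivAt_sin q).fun_neg, hasDerivAt_const]

/-- The parametrization of the cylinder `y₁² + y₂² = 1` in `ℝ⁴` whose central projection to the
unit sphere is `f`. -/
noncomputable def cylinderParam (x : ℝ × ℝ × ℝ) : EuclideanSpace ℝ (Fin 4) :=
  rotatingFrame x.1 0 + (x.2.1 / 2) • rotatingFrame x.1 2 + x.2.2 • rotatingFrame x.1 3

theorem contDiff_cylinderParam {n : WithTop ℕ∞} : ContDiff ℝ n cylinderParam := by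
  have hframe (i : Fin 4) : ContDiff ℝ n fun q => rotatingFrame q i :=
    contDiff_pi.1 contDiff_rotatingFrame i
  unfold cylinderParam
  fun_prop

theorem fderiv_cylinderParam_apply (x v : ℝ × ℝ × ℝ) :
    fderiv ℝ cylinderParam x v =
      v.1 • rotatingFrame x.1 1 + (v.2.1 / 2 + v.1 * x.2.2) • rotatingFrame x.1 2 +
        (v.2.2 - v.1 * (x.2.1 / 2)) • rotatingFrame x.1 3 := by
  have hframe (i : Fin 4) : HasFDerivAt (fun y : ℝ × ℝ × ℝ => rotatingFrame y.1 i) _ x :=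
    (hasDerivAt_pi.1 (hasDerivAt_rotatingFrame x.1) i).hasFDerivAt.comp x hasFDerivAt_fst
  have hp : HasFDerivAt (fun y : ℝ × ℝ × ℝ => y.2.1 / 2)
      ((2⁻¹ : ℝ) • (.fst ℝ ℝ ℝ ∘L .snd ℝ ℝ (ℝ × ℝ))) x := by
    simpa [div_eq_mul_inv] using (hasFDerivAt_id (𝕜 := ℝ) x).snd.fst.mul_const 2⁻¹
  have hz : HasFDerivAt (fun y : ℝ × ℝ × ℝ => y.2.2)
      (.snd ℝ ℝ ℝ ∘L .snd ℝ ℝ (ℝ × ℝ)) x := hasFDerivAt_snd.comp x hasFDerivAt_snd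
  have hparam : HasFDerivAt cylinderParam _ x :=
    ((hframe 0).add (hp.smul (hframe 2))).add (hz.smul (hframe 3))
  rw [hparam.fderiv]
  simp only [Matrix.cons_val, add_apply, smul_apply, ContinuousLinearMap.comp_apply,
    ContinuousLinearMap.coe_fst', ContinuousLinearMap.coe_snd',
    ContinuousLinearMap.toSpanSingleton_apply, ContinuousLinearMap.smulRight_apply, smul_eq_mul]
  module

theorem eq_zero_of_fderiv_cylinderParam_eq_smul {x v : ℝ × ℝ × ℝ} {t : ℝ}
    (h : fderiv ℝ cylinderParam x v = t • cylinderParam x) : v = 0 := by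
  obtain ⟨q, p, z⟩ := x
  obtain ⟨a, b, c⟩ := v
  rw [fderiv_cylinderParam_apply, cylinderParam, ← sub_eq_zero] at h
  have hcombination : ∑ i, ![-t, a, b / 2 + a * z - t * (p / 2), c - a * (p / 2) - t * z] i •
      rotatingFrame q i = 0 := by
    rw [Fin.sum_univ_four, ← h]
    simp only [Matrix.cons_val]
    module
  have hcoeff := Fintype.linearIndependent_iff.1
    (orthonormal_rotatingFrame q).linearIndependent _ hcombination
  have ht : t = 0 := by simpa using hcoeff 0
  have ha : a = 0 := hcoeff 1
  have hb : b = 0 := by simpa [ht, ha] using hcoeff 2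
  have hc : c = 0 := by simpa [ht, ha] using hcoeff 3
  simp [ha, hb, hc]

theorem lam_pos (q p z : ℝ) : 0 < lam q p z := by
  unfold lam
  positivity

theorem contDiff_lam {n : WithTop ℕ∞} :
    ContDiff ℝ n fun x : ℝ × ℝ × ℝ => lam x.1 x.2.1 x.2.2 := by
  have hpos (x : ℝ × ℝ × ℝ) : 0 < 1 + x.2.1 ^ 2 / 4 + x.2.2 ^ 2 := by positivity
  exact (ContDiff.sqrt (by fun_prop) fun x => (hpos x).ne').inv
    fun x => (sqrt_pos.2 (hpos x)).ne'

theorem f_eq_lam_smul_cylinderParam :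
    f = fun x => lam x.1 x.2.1 x.2.2 • cylinderParam x := by
  funext x
  refine congrArg (lam x.1 x.2.1 x.2.2 • ·) ?_
  ext i
  fin_cases i <;> simp [cylinderParam, rotatingFrame, sub_eq_add_neg]

/-- f is C^∞ and its Fréchet derivative is injective at every point;
i.e., f is a smooth immersion. -/
theorem f_smooth_immersion :
    ContDiff ℝ (⊤ : ℕ∞) f ∧ ∀ x : ℝ × ℝ × ℝ, Function.Injective (fderiv ℝ f x) := by
  rw [f_eq_lam_smul_cylinderParam]
  refine ⟨contDiff_lam.smul contDiff_cylinderParam, fun x => ?_⟩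
  exact injective_fderiv_smul
    (contDiff_lam.differentiable one_ne_zero x)
    (contDiff_cylinderParam.differentiable one_ne_zero x)
    (lam_pos _ _ _).ne'
    fun _ _ => eq_zero_of_fderiv_cylinderParam_eq_smul
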